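/- For every z ∈ ℂ with Re z > 0, the Hankel functions satisfy |H₀⁽¹⁾(z)| ≤ e^{|Im z|}/(Re z)^{1/2} and |H̄₀⁽¹⁾(z)| ≤ e^{|Im z|}/(Re z)^{1/2}. -/

import Mathlib

/-!
The bound comes from the integral representation, for `Re z > 0`,
`H₀⁽¹⁾(z) = (2/π) ∫₀^∞ e^{-z(t-i)} / √(2it - t²) dt`   (`hankelH0_eq`).
Since `|2it - t²| ≥ 2t`, the integral is at most `e^{-Im z} ∫₀^∞ e^{-t Re z} (2t)^{-1/2} dt
= e^{-Im z} √(π / (2 Re z))`, and `(2/π) √(π/2) ≤ 1` (`norm_hankelInt_le`, `norm_hankelH0_le`).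
The second function is obtained by conjugation, `H̄₀⁽¹⁾(z) = conj (H₀⁽¹⁾(conj z))`.

To identify the integral with the function defined by power series, both are shown to solve Bessel's
equation of order zero on the half-plane, written as a first-order system for `f` and `z f'`
(`besselPair_H`, `besselPair_int`). A solution with `f → 0` and `z f' → 0` at `0⁺` is zero, because
its Wronskian with `J₀` is constant (`BesselPair.eq_zero`). It remains to compare the two solutions
and their derivatives `z d/dz` as `x → 0⁺` (`tendsto_sub_hankel`, `tendsto_thetaInt`,
`tendsto_thetaH`). For the integral, one integrates by parts against the primitive `arcosh (1 + it)`
and substitutes `u = x t`; the limit is `∫₀^∞ e^{-u} log (2iu) du = -γ + log (2i)`, which is where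
Euler's constant enters, through `Γ'(1) = -γ`.
-/

open MeasureTheory Real Complex Filter

noncomputable section

/-- The Euclidean plane. -/
abbrev E2 : Type := EuclideanSpace ℝ (Fin 2)

/-- Bessel function `J₀` (power series, entire). -/
def besselJ0 (z : ℂ) : ℂ :=
  ∑' m : ℕ, ((-1 : ℂ) ^ m * (z / 2) ^ (2 * m)) / ((m.factorial : ℂ)) ^ 2

/-- Partial harmonic sum `1 + 1/2 + ⋯ + 1/m`. -/
def harmSum (m : ℕ) : ℂ := ∑ j ∈ Finset.range m, (1 : ℂ) / (j + 1)

/-- Bessel function `Y₀` (with the principal branch of the logarithm). -/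
def besselY0 (z : ℂ) : ℂ :=
  (2 / Real.pi) * (((Real.eulerMascheroniConstant : ℂ) + Complex.log (z / 2)) * besselJ0 z
    - ∑' m : ℕ, ((-1 : ℂ) ^ (m + 1) * (z / 2) ^ (2 * (m + 1)) * harmSum (m + 1)) /
        (((m + 1).factorial : ℂ)) ^ 2)

/-- Hankel function of the first kind of order zero, `H₀⁽¹⁾ = J₀ + iY₀`. -/
def hankelH0 (z : ℂ) : ℂ := besselJ0 z + Complex.I * besselY0 z

/-- The "conjugate" Hankel function `H̄₀⁽¹⁾ = J₀ − iY₀`. -/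
def hankelH0bar (z : ℂ) : ℂ := besselJ0 z - Complex.I * besselY0 z

/-- The radiating scattering solution of `(Δ + k²)u = −f₁ − i k f₀`:
`u(x,k) = (−i/4)∫_Ω H₀⁽¹⁾(k|x−y|)(f₁(y) + i k f₀(y)) dy`. -/
def scatSol (Ω : Set E2) (f₀ f₁ : E2 → ℝ) (x : E2) (k : ℂ) : ℂ :=
  (-Complex.I / 4) *
    ∫ y in Ω, hankelH0 (k * (‖x - y‖ : ℝ)) * ((f₁ y : ℂ) + Complex.I * k * (f₀ y : ℂ))

/-- Partial derivative of a real valued function in the `i`-th coordinate direction. -/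
def pd (i : Fin 2) (f : E2 → ℝ) : E2 → ℝ := fun x => fderiv ℝ f x (EuclideanSpace.single i 1)

/-- Squared Sobolev norm `‖f‖²_{(m)} = ∑_{|α|≤m} ∫ |∂^α f|²`. -/
def sobNormSq (m : ℕ) (f : E2 → ℝ) : ℝ :=
  ∑ α ∈ (Finset.range (m + 1) ×ˢ Finset.range (m + 1)).filter (fun α => α.1 + α.2 ≤ m),
    ∫ x : E2, ((pd 0)^[α.1] ((pd 1)^[α.2] f) x) ^ 2

/-- Squared euclidean norm of the gradient of a complex valued function on the plane. -/
def gradNormSq (g : E2 → ℂ) (x : E2) : ℝ :=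
  ∑ i : Fin 2, ‖fderiv ℝ g x (EuclideanSpace.single i 1)‖ ^ 2

/-- Squared euclidean norm of the gradient of a real valued function on the plane. -/
def gradNormSqR (g : E2 → ℝ) (x : E2) : ℝ :=
  ∑ i : Fin 2, (fderiv ℝ g x (EuclideanSpace.single i 1)) ^ 2

/-- Laplacian of a complex valued function on the plane (sum of pure second partials). -/
def lapC (g : E2 → ℂ) (x : E2) : ℂ :=
  ∑ i : Fin 2, fderiv ℝ (fun y => fderiv ℝ g y (EuclideanSpace.single i 1)) x
    (EuclideanSpace.single i 1)

/-- Laplacian of a real valued function on the plane. -/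
def lapR (g : E2 → ℝ) (x : E2) : ℝ :=
  ∑ i : Fin 2, fderiv ℝ (fun y => fderiv ℝ g y (EuclideanSpace.single i 1)) x
    (EuclideanSpace.single i 1)

/-- Laplacian of a real valued function on `ℂ ≅ ℝ²`. -/
def lapPlane (g : ℂ → ℝ) (z : ℂ) : ℝ :=
  fderiv ℝ (fun w => fderiv ℝ g w 1) z 1 +
    fderiv ℝ (fun w => fderiv ℝ g w Complex.I) z Complex.I

/-- `C²`-smooth boundary: near every boundary point, `Ω` is a sublevel set of a `C²`
defining function with nonvanishing gradient. -/
def HasC2Boundary (Ω : Set E2) : Prop :=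
  ∀ x ∈ frontier Ω, ∃ (U : Set E2) (g : E2 → ℝ), IsOpen U ∧ x ∈ U ∧ ContDiff ℝ 2 g ∧
    (∀ y ∈ U, fderiv ℝ g y ≠ 0) ∧ (Ω ∩ U = {y ∈ U | g y < 0}) ∧
    (frontier Ω ∩ U = {y ∈ U | g y = 0})

/-- Kirchhoff-type solution of the plane wave equation with initial data `(−f₀, f₁)`,
extended by zero to `t ≤ 0`. -/
def waveSol (f₀ f₁ : E2 → ℝ) (x : E2) (t : ℝ) : ℝ :=
  if t ≤ 0 then 0 else
    (1 / (2 * Real.pi)) * ∫ y in Metric.ball x t, f₁ y / Real.sqrt (t ^ 2 - ‖x - y‖ ^ 2)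
    - deriv (fun τ : ℝ =>
        (1 / (2 * Real.pi)) * ∫ y in Metric.ball x τ, f₀ y / Real.sqrt (τ ^ 2 - ‖x - y‖ ^ 2)) t

/-- The quantity `I₁(k)`: the contour integral (along the segment from `0` to `k`,
parametrized by `ω = ks`) of `2ω²∫_{∂Ω} u(x,ω)ū(x,ω)`. -/
def I1 (Ω : Set E2) (f₀ f₁ : E2 → ℝ) (k : ℂ) : ℂ :=
  2 * k * ∫ s in Set.Ioo (0 : ℝ) 1, (k * s) ^ 2 *
    ∫ x in frontier Ω,
      ((-Complex.I / 4) * ∫ y in Ω,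
        ((f₁ y : ℂ) + Complex.I * (k * s) * (f₀ y : ℂ)) * hankelH0 (k * s * (‖x - y‖ : ℝ))) *
      ((Complex.I / 4) * ∫ y in Ω,
        ((f₁ y : ℂ) - Complex.I * (k * s) * (f₀ y : ℂ)) * hankelH0bar (k * s * (‖x - y‖ : ℝ)))
      ∂(μH[1])

/-- The quantity `I₂(k)`: as `I₁(k)` but with the spatial gradients of the Hankel kernels,
paired by the dot product. -/
def I2 (Ω : Set E2) (f₀ f₁ : E2 → ℝ) (k : ℂ) : ℂ :=
  2 * k * ∫ s in Set.Ioo (0 : ℝ) 1, (k * s) ^ 2 *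
    ∫ x in frontier Ω,
      ∑ i : Fin 2,
        ((-Complex.I / 4) * ∫ y in Ω,
          ((f₁ y : ℂ) + Complex.I * (k * s) * (f₀ y : ℂ)) *
            fderiv ℝ (fun x' => hankelH0 (k * s * (‖x' - y‖ : ℝ))) x
              (EuclideanSpace.single i 1)) *
        ((Complex.I / 4) * ∫ y in Ω,
          ((f₁ y : ℂ) - Complex.I * (k * s) * (f₀ y : ℂ)) *
            fderiv ℝ (fun x' => hankelH0bar (k * s * (‖x' - y‖ : ℝ))) x
              (EuclideanSpace.single i 1))
      ∂(μH[1])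

end

noncomputable section

open scoped Topology

/-! ### Entire power series -/

/-- The power series `∑ cₘ wᵐ`. -/
def pSeries (c : ℕ → ℂ) (w : ℂ) : ℂ := ∑' m, c m * w ^ m

/-- The coefficients `c` define an entire function: `∑ cₘ wᵐ` converges absolutely everywhere. -/
def EntireCoeff (c : ℕ → ℂ) : Prop := ∀ r : ℝ, 0 ≤ r → Summable fun m => ‖c m‖ * r ^ m

/-- The coefficients of `w f'(w)` when `c` are those of `f`. -/
def thetaCoeff (c : ℕ → ℂ) (m : ℕ) : ℂ := m * c m

lemma EntireCoeff.of_le {c d : ℕ → ℂ} (hd : EntireCoeff d) (h : ∀ m, ‖c m‖ ≤ ‖d m‖) :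
    EntireCoeff c := fun r hr =>
  Summable.of_nonneg_of_le (fun m => by positivity)
    (fun m => mul_le_mul_of_nonneg_right (h m) (by positivity)) (hd r hr)

lemma EntireCoeff.theta {c : ℕ → ℂ} (hc : EntireCoeff c) : EntireCoeff (thetaCoeff c) := by
  intro r hr
  refine Summable.of_nonneg_of_le (fun m => by positivity) (fun m => ?_) (hc (2 * r) (by positivity))
  have h : (m : ℝ) ≤ 2 ^ m := by exact_mod_cast m.lt_two_pow_self.le
  rw [thetaCoeff, norm_mul, Complex.norm_natCast, mul_pow]
  calc (m : ℝ) * ‖c m‖ * r ^ m ≤ 2 ^ m * ‖c m‖ * r ^ m := by gcongr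
    _ = _ := by ring

lemma EntireCoeff.summable {c : ℕ → ℂ} (hc : EntireCoeff c) (w : ℂ) :
    Summable fun m => c m * w ^ m := by
  refine Summable.of_norm ?_
  simpa [norm_mul, norm_pow] using hc ‖w‖ (norm_nonneg w)

lemma EntireCoeff.exists_hasDerivAt {c : ℕ → ℂ} (hc : EntireCoeff c) (w : ℂ) :
    ∃ d, HasDerivAt (pSeries c) d w ∧ w * d = pSeries (thetaCoeff c) w := by
  refine ⟨∑' m, c m * (m * w ^ (m - 1)), ?_, ?_⟩
  · set r : ℝ := ‖w‖ + 1 with hr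
    have hr1 : 1 ≤ r := by have := norm_nonneg w; linarith
    refine hasDerivAt_tsum_of_isPreconnected (t := Metric.ball 0 r) (y₀ := 0)
      (hc.theta r (by linarith)) Metric.isOpen_ball (convex_ball _ _).isPreconnected
      (fun n y _ => (hasDerivAt_pow n y).const_mul (c n)) ?_ (by simp; linarith)
      (hc.summable 0) (by simp [hr])
    intro n y hy
    have hy' : ‖y‖ ≤ r := by simpa using (Metric.mem_ball.1 hy).le
    rw [thetaCoeff, norm_mul, norm_mul, norm_mul, norm_pow, Complex.norm_natCast]
    have : ‖y‖ ^ (n - 1) ≤ r ^ n :=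
      (pow_le_pow_left₀ (norm_nonneg _) hy' _).trans (pow_le_pow_right₀ hr1 (Nat.sub_le _ _))
    calc ‖c n‖ * (n * ‖y‖ ^ (n - 1)) ≤ ‖c n‖ * (n * r ^ n) := by gcongr
      _ = _ := by ring
  · rw [pSeries, ← tsum_mul_left]
    refine tsum_congr fun m => ?_
    rcases m with _ | m
    · simp [thetaCoeff]
    · simp only [thetaCoeff, Nat.add_sub_cancel, pow_succ]; ring

lemma EntireCoeff.continuous {c : ℕ → ℂ} (hc : EntireCoeff c) : Continuous (pSeries c) :=
  continuous_iff_continuousAt.2 fun w => (hc.exists_hasDerivAt w).choose_spec.1.continuousAt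

lemma pSeries_zero (c : ℕ → ℂ) : pSeries c 0 = c 0 := by
  rw [pSeries, tsum_eq_single 0 (by intro m hm; simp [hm])]; simp

/-- A series in `w = z²/4` is differentiated by `z d/dz = 2 w d/dw`. -/
lemma EntireCoeff.hasDerivAt_sq {c : ℕ → ℂ} (hc : EntireCoeff c) {z : ℂ} (hz : z ≠ 0) :
    HasDerivAt (fun z => pSeries c (z ^ 2 / 4)) (2 * pSeries (thetaCoeff c) (z ^ 2 / 4) / z) z := by
  obtain ⟨d, hd, hd'⟩ := hc.exists_hasDerivAt (z ^ 2 / 4)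
  have h1 : HasDerivAt (fun z : ℂ => z ^ 2 / 4) (2 * z / 4) z := by
    simpa using (hasDerivAt_pow 2 z).div_const 4
  refine (hd.comp z h1).congr_deriv ?_
  rw [← hd']; field_simp

/-! ### The series of the Bessel functions -/

/-- Coefficients of `J₀` as a series in `w = z²/4`. -/
def coeffJ (m : ℕ) : ℂ := (-1) ^ m / (m.factorial : ℂ) ^ 2

/-- Coefficients in `w = z²/4` of the part of `Y₀` free of the logarithm. -/
def coeffK (m : ℕ) : ℂ := coeffJ m * harmSum m

lemma entire_coeffJ : EntireCoeff coeffJ := by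
  intro r hr
  refine Summable.of_nonneg_of_le (fun m => by positivity) (fun m => ?_)
    (Real.summable_pow_div_factorial r)
  rw [coeffJ, norm_div, norm_pow, norm_pow, norm_neg, norm_one, one_pow, Complex.norm_natCast]
  have h : (1 : ℝ) ≤ m.factorial := by exact_mod_cast m.factorial_pos
  rw [div_mul_eq_mul_div, one_mul]
  gcongr
  nlinarith

lemma norm_harmSum_le (m : ℕ) : ‖harmSum m‖ ≤ m := by
  refine (norm_sum_le _ _).trans ?_
  calc ∑ j ∈ Finset.range m, ‖(1 : ℂ) / (j + 1)‖ ≤ ∑ j ∈ Finset.range m, (1 : ℝ) := by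
        refine Finset.sum_le_sum fun j _ => ?_
        have : ‖(j : ℂ) + 1‖ = j + 1 := by exact_mod_cast Complex.norm_natCast (j + 1)
        rw [norm_div, norm_one, this, div_le_one (by positivity)]
        linarith [Nat.cast_nonneg (α := ℝ) j]
    _ = m := by simp

lemma entire_coeffK : EntireCoeff coeffK := by
  refine entire_coeffJ.theta.of_le fun m => ?_
  rw [coeffK, thetaCoeff, norm_mul, norm_mul, mul_comm, Complex.norm_natCast]
  exact mul_le_mul_of_nonneg_right (norm_harmSum_le m) (norm_nonneg _)

lemma coeffJ_succ (m : ℕ) : ((m : ℂ) + 1) ^ 2 * coeffJ (m + 1) = -coeffJ m := by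
  have h1 : (m.factorial : ℂ) ≠ 0 := by exact_mod_cast m.factorial_ne_zero
  have h2 : (m : ℂ) + 1 ≠ 0 := by exact_mod_cast m.succ_ne_zero
  simp only [coeffJ, Nat.factorial_succ, Nat.cast_mul, Nat.cast_add, Nat.cast_one, pow_succ]
  field_simp

lemma coeffK_succ (m : ℕ) :
    ((m : ℂ) + 1) ^ 2 * coeffK (m + 1) = -coeffK m + thetaCoeff coeffJ (m + 1) := by
  have h2 : (m : ℂ) + 1 ≠ 0 := by exact_mod_cast m.succ_ne_zero
  have h3 : harmSum (m + 1) = harmSum m + 1 / (m + 1) := Finset.sum_range_succ _ _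
  have h4 := coeffJ_succ m
  have h5 : thetaCoeff coeffJ (m + 1) = ((m : ℂ) + 1) ^ 2 * coeffJ (m + 1) * (1 / (m + 1)) := by
    simp only [thetaCoeff]; push_cast; field_simp
  rw [h5, coeffK, coeffK, h3]
  linear_combination (harmSum m) * h4

/-- A recurrence `(m + 1)² cₘ₊₁ = -dₘ + eₘ₊₁` between coefficients is the differential equation
`(w d/dw)² C = -w D + E` between the functions. -/
lemma pSeries_of_succ {c d e : ℕ → ℂ} (hc : EntireCoeff c) (hd : EntireCoeff d)
    (he : EntireCoeff e) (he0 : e 0 = 0)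
    (h : ∀ m : ℕ, ((m : ℂ) + 1) ^ 2 * c (m + 1) = -d m + e (m + 1)) (w : ℂ) :
    pSeries (thetaCoeff (thetaCoeff c)) w = -w * pSeries d w + pSeries e w := by
  rw [pSeries, (hc.theta.theta.summable w).tsum_eq_zero_add, pSeries, pSeries,
    (he.summable w).tsum_eq_zero_add, ← tsum_mul_left]
  simp only [he0, thetaCoeff, Nat.cast_zero, zero_mul, zero_add]
  rw [← ((hd.summable w).mul_left (-w)).tsum_add ((summable_nat_add_iff 1).2 (he.summable w))]
  refine tsum_congr fun m => ?_
  push_cast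
  linear_combination w ^ (m + 1) * h m

/-- `θ²J₀ = -z²J₀` for `θ = z d/dz`, in the variable `w = z²/4`. -/
lemma theta_theta_J (w : ℂ) :
    pSeries (thetaCoeff (thetaCoeff coeffJ)) w = -w * pSeries coeffJ w := by
  have h0 : EntireCoeff (fun _ => 0) := fun r _ => by simp
  have := pSeries_of_succ entire_coeffJ entire_coeffJ h0 rfl
    (fun m => by rw [coeffJ_succ, add_zero]) w
  rw [this]; simp [pSeries]

lemma theta_theta_K (w : ℂ) : pSeries (thetaCoeff (thetaCoeff coeffK)) w =
    -w * pSeries coeffK w + pSeries (thetaCoeff coeffJ) w :=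
  pSeries_of_succ entire_coeffK entire_coeffK entire_coeffJ.theta (by simp [thetaCoeff])
    coeffK_succ w

lemma besselJ0_eq (z : ℂ) : besselJ0 z = pSeries coeffJ (z ^ 2 / 4) := by
  refine tsum_congr fun m => ?_
  rw [coeffJ, pow_mul, div_pow]; norm_num; ring

lemma besselY0_eq (z : ℂ) : besselY0 z = (2 / Real.pi) *
    (((Real.eulerMascheroniConstant : ℂ) + Complex.log (z / 2)) * pSeries coeffJ (z ^ 2 / 4)
      - pSeries coeffK (z ^ 2 / 4)) := by
  have hK : ∑' m : ℕ, ((-1 : ℂ) ^ (m + 1) * (z / 2) ^ (2 * (m + 1)) * harmSum (m + 1)) /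
        (((m + 1).factorial : ℂ)) ^ 2 = pSeries coeffK (z ^ 2 / 4) := by
    rw [pSeries, (entire_coeffK.summable _).tsum_eq_zero_add]
    simp only [coeffK, harmSum, Finset.range_zero, Finset.sum_empty, mul_zero, zero_mul, zero_add]
    refine tsum_congr fun m => ?_
    rw [coeffJ, pow_mul, div_pow]; norm_num; ring
  rw [besselY0, besselJ0_eq, hK]

/-! ### Bessel's equation and uniqueness at the origin -/

/-- Bessel's equation of order zero on the right half-plane as a first-order system for
`f` and `g = z f'`: the equation `z (z f')' = -z² f`. -/
def BesselPair (f g : ℂ → ℂ) : Prop :=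
  ∀ z : ℂ, 0 < z.re → HasDerivAt f (g z / z) z ∧ HasDerivAt g (-z * f z) z

/-- `z J₀'(z)`. -/
def thetaJ (z : ℂ) : ℂ := 2 * pSeries (thetaCoeff coeffJ) (z ^ 2 / 4)

/-- `z H₀⁽¹⁾'(z)`. -/
def thetaH (z : ℂ) : ℂ := thetaJ z + Complex.I * ((2 / Real.pi) *
    (besselJ0 z + ((Real.eulerMascheroniConstant : ℂ) + Complex.log (z / 2)) * thetaJ z
      - 2 * pSeries (thetaCoeff coeffK) (z ^ 2 / 4)))

lemma besselPair_J : BesselPair besselJ0 thetaJ := by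
  intro z hz
  have hz0 := ne_zero_of_re_pos hz
  constructor
  · rw [show besselJ0 = fun z => pSeries coeffJ (z ^ 2 / 4) from funext besselJ0_eq]
    exact entire_coeffJ.hasDerivAt_sq hz0
  · refine ((entire_coeffJ.theta.hasDerivAt_sq hz0).const_mul 2).congr_deriv ?_
    rw [theta_theta_J, besselJ0_eq]; field_simp; ring

lemma hasDerivAt_log_half {z : ℂ} (hz : 0 < z.re) : HasDerivAt
    (fun z => (Real.eulerMascheroniConstant : ℂ) + Complex.log (z / 2)) (1 / z) z := by
  have hz0 := ne_zero_of_re_pos hz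
  have h2 : HasDerivAt (fun z : ℂ => z / 2) (1 / 2) z := (hasDerivAt_id z).div_const 2
  have hs : z / 2 ∈ Complex.slitPlane := by
    refine Or.inl ?_
    have : (z / 2).re = z.re / 2 := by simp
    rw [this]; linarith
  refine ((h2.clog hs).const_add _).congr_deriv ?_
  field_simp

lemma besselPair_H : BesselPair hankelH0 thetaH := by
  intro z hz
  have hz0 := ne_zero_of_re_pos hz
  have hpi : (Real.pi : ℂ) ≠ 0 := by exact_mod_cast Real.pi_ne_zero
  obtain ⟨hJ, hJ'⟩ := besselPair_J z hz
  have hL := hasDerivAt_log_half hz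
  have hK := entire_coeffK.hasDerivAt_sq hz0
  have hK' := entire_coeffK.theta.hasDerivAt_sq hz0
  constructor
  · have hY : besselY0 = fun z => (2 / (Real.pi : ℂ)) *
        (((Real.eulerMascheroniConstant : ℂ) + Complex.log (z / 2)) * besselJ0 z
        - pSeries coeffK (z ^ 2 / 4)) := by
      funext z; rw [besselY0_eq, besselJ0_eq]
    have := hJ.add ((((hL.mul hJ).sub hK).const_mul (2 / (Real.pi : ℂ))).const_mul Complex.I)
    rw [show hankelH0 = fun z => besselJ0 z + Complex.I * besselY0 z from rfl, hY]
    refine this.congr_deriv ?_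
    rw [thetaH]; field_simp
  · have := hJ'.add ((((hJ.add (hL.mul hJ')).sub (hK'.const_mul 2)).const_mul
      (2 / (Real.pi : ℂ))).const_mul Complex.I)
    refine this.congr_deriv ?_
    rw [theta_theta_K, hankelH0, besselY0_eq, besselJ0_eq]
    simp only [thetaJ]
    field_simp
    ring

/-- Uniqueness at the singular point: a solution of Bessel's equation on the half-plane with
`f → 0` and `z f' → 0` along the positive reals vanishes. Its Wronskian with `J₀` is constant,
hence zero, so `f / J₀` is constant near the origin; the identity theorem does the rest. -/
lemma BesselPair.eq_zero {f g : ℂ → ℂ} (h : BesselPair f g)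
    (hf : Tendsto (fun x : ℝ => f x) (𝓝[>] 0) (𝓝 0))
    (hg : Tendsto (fun x : ℝ => g x) (𝓝[>] 0) (𝓝 0)) {z : ℂ} (hz : 0 < z.re) : f z = 0 := by
  set U : Set ℂ := {z | 0 < z.re} with hU
  have hUo : IsOpen U := isOpen_lt continuous_const Complex.continuous_re
  have hUc : Convex ℝ U := convex_halfSpace_re_gt 0
  have hofReal : Tendsto (fun x : ℝ => (x : ℂ)) (𝓝[>] 0) (𝓝 0) :=
    (Complex.continuous_ofReal.tendsto' 0 0 (by simp)).mono_left nhdsWithin_le_nhds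
  have hsq : Continuous fun z : ℂ => z ^ 2 / 4 := by fun_prop
  have hJc : Continuous besselJ0 := by
    rw [show besselJ0 = fun z => pSeries coeffJ (z ^ 2 / 4) from funext besselJ0_eq]
    exact entire_coeffJ.continuous.comp hsq
  have hTc : Continuous thetaJ :=
    continuous_const.mul (entire_coeffJ.theta.continuous.comp hsq)
  have hJ0 : besselJ0 0 = 1 := by rw [besselJ0_eq]; simp [pSeries_zero, coeffJ]
  have hJt := (hJc.tendsto 0).comp hofReal
  have hTt := (hTc.tendsto 0).comp hofReal
  have hpos : ∀ᶠ x : ℝ in 𝓝[>] 0, 0 < x := self_mem_nhdsWithin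
  have hW : ∀ z ∈ U, f z * thetaJ z - g z * besselJ0 z = 0 := by
    have hd : ∀ z ∈ U, HasDerivAt (fun z => f z * thetaJ z - g z * besselJ0 z) 0 z := by
      intro z hz
      obtain ⟨h1, h2⟩ := h z hz
      obtain ⟨h3, h4⟩ := besselPair_J z hz
      refine ((h1.mul h4).sub (h2.mul h3)).congr_deriv ?_
      have := ne_zero_of_re_pos hz
      field_simp; ring
    intro z hz
    have hconst : ∀ x : ℝ, 0 < x → f x * thetaJ x - g x * besselJ0 x =
        f z * thetaJ z - g z * besselJ0 z := fun x hx =>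
      hUo.is_const_of_deriv_eq_zero hUc.isPreconnected
        (fun w hw => (hd w hw).differentiableAt.differentiableWithinAt)
        (fun w hw => (hd w hw).deriv) (by simpa [hU] using hx) hz
    have hlim := (hf.mul hTt).sub (hg.mul hJt)
    simp only [zero_mul, sub_zero] at hlim
    exact tendsto_nhds_unique ((tendsto_congr' (hpos.mono fun x hx => hconst x hx)).1
      (by simpa using hlim)) |> fun h => (h tendsto_const_nhds).symm
  obtain ⟨δ, hδ, hball⟩ : ∃ δ > 0, ∀ w ∈ Metric.ball (0 : ℂ) δ, besselJ0 w ≠ 0 :=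
    Metric.mem_nhds_iff.1 (hJc.continuousAt.eventually_ne (by rw [hJ0]; exact one_ne_zero))
  set V : Set ℂ := U ∩ Metric.ball 0 δ with hV
  have hVo : IsOpen V := hUo.inter Metric.isOpen_ball
  have hq : ∀ w ∈ V, HasDerivAt (fun z => f z / besselJ0 z) 0 w := by
    rintro w ⟨hw, hwb⟩
    refine ((h w hw).1.div (besselPair_J w hw).1 (hball w hwb)).congr_deriv ?_
    have := ne_zero_of_re_pos hw
    rw [div_eq_zero_iff]; left
    linear_combination (-1 / w) * hW w hw
  have hxV : ∀ᶠ x : ℝ in 𝓝[>] 0, (x : ℂ) ∈ V := by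
    filter_upwards [hpos, hofReal (Metric.ball_mem_nhds 0 hδ)] with x hx hx'
    exact ⟨by simpa [hU] using hx, hx'⟩
  have hzero : ∀ w ∈ V, f w = 0 := by
    intro w hw
    have hconst : ∀ x : ℝ, (x : ℂ) ∈ V → f x / besselJ0 x = f w / besselJ0 w := fun x hx =>
      hVo.is_const_of_deriv_eq_zero (hUc.inter (convex_ball _ _)).isPreconnected
        (fun w hw => (hq w hw).differentiableAt.differentiableWithinAt)
        (fun w hw => (hq w hw).deriv) hx hw
    have hlim := hf.div hJt (by rw [hJ0]; exact one_ne_zero)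
    rw [zero_div] at hlim
    have := tendsto_nhds_unique
      ((tendsto_congr' (hxV.mono fun x hx => hconst x hx)).1 hlim) tendsto_const_nhds
    exact (div_eq_zero_iff.1 this.symm).resolve_right (hball w hw.2)
  obtain ⟨x, hx⟩ := hxV.exists
  have han : AnalyticOnNhd ℂ f U := DifferentiableOn.analyticOnNhd
    (fun w hw => (h w hw).1.differentiableAt.differentiableWithinAt) hUo
  exact han.eqOn_of_preconnected_of_eventuallyEq (g := fun _ => 0) analyticOnNhd_const
    hUc.isPreconnected hx.1 (eventually_of_mem (hVo.mem_nhds hx) hzero) hz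

/-! ### The square root in the kernel -/

/-- `√(2it - t²)` with the principal root, so that `√(2it - t²)² = (1 + it)² - 1`. -/
def rootS (t : ℝ) : ℂ := (2 * Complex.I * t - (t : ℂ) ^ 2) ^ (2⁻¹ : ℂ)

lemma rootS_sq (t : ℝ) : rootS t ^ 2 = 2 * Complex.I * t - (t : ℂ) ^ 2 := by
  simp [rootS]

lemma rootS_re_nonneg (t : ℝ) : 0 ≤ (rootS t).re := by
  rw [rootS, Complex.cpow_inv_two_re]; positivity

lemma arg_im (t : ℝ) : (2 * Complex.I * t - (t : ℂ) ^ 2).im = 2 * t := by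
  simp [pow_two]

lemma rootS_im_nonneg {t : ℝ} (ht : 0 ≤ t) : 0 ≤ (rootS t).im := by
  rw [rootS, Complex.cpow_inv_two_im_eq_sqrt (by rw [arg_im]; linarith)]; positivity

lemma norm_rootS_pow (t : ℝ) : ‖rootS t‖ ^ 2 = |t| * √(t ^ 2 + 4) := by
  rw [← norm_pow, rootS_sq, show 2 * Complex.I * t - (t : ℂ) ^ 2 = t * ((-t : ℝ) + (2 : ℝ) * Complex.I) by
    push_cast; ring, norm_mul, Complex.norm_real, Complex.norm_add_mul_I, Real.norm_eq_abs]
  norm_num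

lemma two_mul_le_norm_rootS {t : ℝ} (ht : 0 ≤ t) : 2 * t ≤ ‖rootS t‖ ^ 2 := by
  rw [norm_rootS_pow, abs_of_nonneg ht, mul_comm]
  gcongr
  exact Real.le_sqrt_of_sq_le (by nlinarith)

lemma le_norm_rootS {t : ℝ} (ht : 0 ≤ t) : t ≤ ‖rootS t‖ := by
  refine le_of_sq_le_sq ?_ (norm_nonneg _)
  rw [norm_rootS_pow, abs_of_nonneg ht, pow_two]
  gcongr
  exact Real.le_sqrt_of_sq_le (by linarith)

lemma norm_rootS_pow_le {t : ℝ} (ht : 0 ≤ t) : ‖rootS t‖ ^ 2 ≤ t * (t + 2) := by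
  rw [norm_rootS_pow, abs_of_nonneg ht]
  gcongr
  rw [Real.sqrt_le_left (by linarith)]
  nlinarith

lemma norm_rootS_le {t : ℝ} (ht : 0 ≤ t) : ‖rootS t‖ ≤ t + 1 := by
  refine le_of_sq_le_sq ?_ (by linarith)
  nlinarith [norm_rootS_pow_le ht]

lemma rootS_ne_zero {t : ℝ} (ht : 0 < t) : rootS t ≠ 0 := by
  rw [← norm_pos_iff]; exact ht.trans_le (le_norm_rootS ht.le)

lemma rootS_zero : rootS 0 = 0 := by simp [rootS]

lemma hasDerivAt_rootS {t : ℝ} (ht : 0 < t) : HasDerivAt rootS ((Complex.I - t) / rootS t) t := by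
  have h1 : HasDerivAt (fun t : ℝ => 2 * Complex.I * t - (t : ℂ) ^ 2)
      (2 * Complex.I - 2 * t) t := by
    have h := (hasDerivAt_id t).ofReal_comp
    refine ((h.const_mul (2 * Complex.I)).sub (h.pow 2)).congr_deriv ?_
    simp
  have hs : 2 * Complex.I * t - (t : ℂ) ^ 2 ∈ Complex.slitPlane := by
    refine Or.inr ?_
    rw [arg_im]; positivity
  have h2 := (Complex.hasStrictDerivAt_cpow_const (c := (2⁻¹ : ℂ)) hs).hasDerivAt.scomp t h1
  refine HasDerivAt.congr_deriv (f := rootS) h2 ?_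
  have hS := rootS_ne_zero ht
  have h3 : (2 * Complex.I * t - (t : ℂ) ^ 2) ^ (2⁻¹ - 1 : ℂ) = rootS t / rootS t ^ 2 := by
    rw [Complex.cpow_sub _ _ (Complex.slitPlane_ne_zero hs), Complex.cpow_one, rootS_sq, rootS]
  simp only [h3, smul_eq_mul]
  field_simp

lemma continuousWithinAt_rootS : ContinuousWithinAt rootS (Set.Ici 0) 0 := by
  rw [ContinuousWithinAt, rootS_zero, tendsto_zero_iff_norm_tendsto_zero]
  have h : Tendsto (fun t : ℝ => √(t * (t + 2))) (𝓝[Set.Ici 0] 0) (𝓝 0) := by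
    refine (Continuous.tendsto' ?_ 0 0 (by simp)).mono_left nhdsWithin_le_nhds
    fun_prop
  refine tendsto_of_tendsto_of_tendsto_of_le_of_le' tendsto_const_nhds h
    (Eventually.of_forall fun _ => norm_nonneg _) ?_
  filter_upwards [self_mem_nhdsWithin] with t ht
  exact Real.le_sqrt_of_sq_le (norm_rootS_pow_le ht)

lemma continuousOn_rootS : ContinuousOn rootS (Set.Ioi 0) := fun _ ht =>
  (hasDerivAt_rootS ht).continuousAt.continuousWithinAt

/-! ### Laplace-type integrals on the right half-plane -/

/-- `ψ` has an absolutely convergent Laplace transform on the whole open right half-plane. -/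
def LaplaceOK (ψ : ℝ → ℂ) : Prop :=
  AEStronglyMeasurable ψ (volume.restrict (Set.Ioi 0)) ∧
    ∀ a : ℝ, 0 < a → IntegrableOn (fun t => Real.exp (-(a * t)) * ‖ψ t‖) (Set.Ioi 0)

lemma integrableOn_rpow_exp {s a : ℝ} (hs : -1 < s) (ha : 0 < a) :
    IntegrableOn (fun t : ℝ => Real.exp (-(a * t)) * t ^ s) (Set.Ioi 0) := by
  have := integrableOn_rpow_mul_exp_neg_mul_rpow hs one_pos ha
  simpa [mul_comm] using this

lemma integrableOn_bound {a : ℝ} (ha : 0 < a) (C D E : ℝ) : IntegrableOn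
    (fun t : ℝ => Real.exp (-(a * t)) * (C * t ^ (-(1 / 2) : ℝ) + D * t + E)) (Set.Ioi 0) := by
  have h1 := (integrableOn_rpow_exp (s := -(1 / 2)) (by norm_num) ha).const_mul C
  have h2 := (integrableOn_rpow_exp (s := 1) (by norm_num) ha).const_mul D
  have h3 := (integrableOn_rpow_exp (s := 0) (by norm_num) ha).const_mul E
  refine ((h1.add h2).add h3).congr (Eventually.of_forall fun t => ?_)
  simp only [Pi.add_apply, Real.rpow_one, Real.rpow_zero]
  ring

lemma LaplaceOK.of_bound {ψ : ℝ → ℂ} (hc : ContinuousOn ψ (Set.Ioi 0)) (C D E : ℝ)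
    (h : ∀ t : ℝ, 0 < t → ‖ψ t‖ ≤ C * t ^ (-(1 / 2) : ℝ) + D * t + E) : LaplaceOK ψ := by
  have hm := hc.aestronglyMeasurable (μ := volume) measurableSet_Ioi
  refine ⟨hm, fun a ha => ?_⟩
  refine (integrableOn_bound ha C D E).mono' ?_ ?_
  · exact (Continuous.aestronglyMeasurable (by fun_prop)).mul hm.norm
  · filter_upwards [ae_restrict_mem measurableSet_Ioi] with t ht
    rw [Real.norm_of_nonneg (by positivity)]
    exact mul_le_mul_of_nonneg_left (h t ht) (Real.exp_pos _).le

lemma norm_exp_laplace (z : ℂ) (t : ℝ) :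
    ‖Complex.exp (-z * (t - Complex.I))‖ = Real.exp (-z.im) * Real.exp (-(z.re * t)) := by
  rw [Complex.norm_exp, ← Real.exp_add]
  congr 1
  simp

lemma continuous_exp_laplace (z : ℂ) :
    Continuous fun t : ℝ => Complex.exp (-z * (t - Complex.I)) := by fun_prop

lemma LaplaceOK.integrable {ψ : ℝ → ℂ} (h : LaplaceOK ψ) {z : ℂ} (hz : 0 < z.re) :
    IntegrableOn (fun t : ℝ => Complex.exp (-z * (t - Complex.I)) * ψ t) (Set.Ioi 0) := by
  refine ((h.2 z.re hz).const_mul (Real.exp (-z.im))).mono'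
    ((continuous_exp_laplace z).aestronglyMeasurable.mul h.1) (Eventually.of_forall fun t => ?_)
  rw [norm_mul, norm_exp_laplace, mul_assoc]

lemma norm_sub_I_le {t : ℝ} (ht : 0 < t) : ‖(t : ℂ) - Complex.I‖ ≤ t + 1 := by
  refine (norm_sub_le _ _).trans ?_
  simp [abs_of_pos ht]

lemma LaplaceOK.mul_sub_I {ψ : ℝ → ℂ} (h : LaplaceOK ψ) :
    LaplaceOK fun t => (t - Complex.I) * ψ t := by
  have hm : AEStronglyMeasurable (fun t : ℝ => ((t : ℂ) - Complex.I) * ψ t)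
      (volume.restrict (Set.Ioi 0)) :=
    (Continuous.aestronglyMeasurable (by fun_prop)).mul h.1
  refine ⟨hm, fun a ha => ?_⟩
  refine ((h.2 (a / 2) (by linarith)).const_mul (2 / a + 1)).mono'
    ((Continuous.aestronglyMeasurable (by fun_prop)).mul hm.norm) ?_
  filter_upwards [ae_restrict_mem measurableSet_Ioi] with t ht
  have ht : 0 < t := ht
  rw [Real.norm_of_nonneg (by positivity), norm_mul]
  -- the polynomial factor is absorbed by half of the exponential decay
  have h1 : t + 1 ≤ (2 / a + 1) * Real.exp (a / 2 * t) := by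
    have h2 := Real.add_one_le_exp (a / 2 * t)
    have h3 : 1 ≤ Real.exp (a / 2 * t) := Real.one_le_exp (by positivity)
    have h4 : t = 2 / a * (a / 2 * t) := by field_simp
    have h5 : 2 / a * (a / 2 * t) ≤ 2 / a * Real.exp (a / 2 * t) := by gcongr; linarith
    linarith
  have h6 : Real.exp (-(a * t)) * Real.exp (a / 2 * t) = Real.exp (-(a / 2 * t)) := by
    rw [← Real.exp_add]; congr 1; ring
  calc Real.exp (-(a * t)) * (‖(t : ℂ) - Complex.I‖ * ‖ψ t‖)
      ≤ Real.exp (-(a * t)) * ((2 / a + 1) * Real.exp (a / 2 * t) * ‖ψ t‖) := by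
        gcongr; exact (norm_sub_I_le ht).trans h1
    _ = _ := by rw [← h6]; ring

/-- Differentiation under the integral sign, dominated on the disc of radius `Re z / 2`. -/
lemma LaplaceOK.hasDerivAt {ψ : ℝ → ℂ} (h : LaplaceOK ψ) {z : ℂ} (hz : 0 < z.re) :
    HasDerivAt (fun z => ∫ t in Set.Ioi (0 : ℝ), Complex.exp (-z * (t - Complex.I)) * ψ t)
      (-∫ t in Set.Ioi (0 : ℝ), Complex.exp (-z * (t - Complex.I)) * ((t - Complex.I) * ψ t)) z := by
  have hx : 0 < z.re / 2 := by linarith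
  rw [← integral_neg]
  refine (hasDerivAt_integral_of_dominated_loc_of_deriv_le
    (F' := fun z t => -(Complex.exp (-z * (t - Complex.I)) * ((t - Complex.I) * ψ t)))
    (bound := fun t => Real.exp (|z.im| + z.re / 2) *
      (Real.exp (-(z.re / 2 * t)) * ‖(t - Complex.I) * ψ t‖)) (Metric.ball_mem_nhds z hx)
    (Eventually.of_forall fun w => (continuous_exp_laplace w).aestronglyMeasurable.mul h.1)
    (h.integrable hz)
    ((continuous_exp_laplace z).aestronglyMeasurable.mul h.mul_sub_I.1).neg ?_
    ((h.mul_sub_I.2 _ hx).const_mul _) ?_).2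
  · filter_upwards [ae_restrict_mem measurableSet_Ioi] with t ht w hw
    have ht : 0 < t := ht
    have hw' : ‖w - z‖ < z.re / 2 := by simpa [dist_eq_norm] using hw
    have h1 := abs_lt.1 ((Complex.abs_re_le_norm (w - z)).trans_lt hw')
    have h2 := abs_lt.1 ((Complex.abs_im_le_norm (w - z)).trans_lt hw')
    simp only [Complex.sub_re, Complex.sub_im] at h1 h2
    rw [norm_neg, norm_mul, norm_exp_laplace, mul_assoc]
    have h3 := neg_abs_le z.im
    gcongr
    · linarith
    · linarith
  · refine Eventually.of_forall fun t w _ => ?_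
    have h1 : HasDerivAt (fun w : ℂ => -w * ((t : ℂ) - Complex.I)) (-1 * (t - Complex.I)) w :=
      ((hasDerivAt_id w).neg).mul_const _
    refine (h1.cexp.mul_const (ψ t)).congr_deriv ?_
    ring

/-! ### The integral representation: equation and bound -/

/-- The kernel `1/√(2it - t²)`. -/
def phi (t : ℝ) : ℂ := 1 / rootS t

lemma norm_phi_le {t : ℝ} (ht : 0 < t) : ‖phi t‖ ≤ (2 * t) ^ (-(1 / 2) : ℝ) := by
  rw [phi, norm_div, norm_one, Real.rpow_neg (by positivity), one_div, ← Real.sqrt_eq_rpow]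
  have := Real.sqrt_pos.2 (by positivity : 0 < 2 * t)
  gcongr
  exact Real.sqrt_le_left (norm_nonneg _) |>.2 (two_mul_le_norm_rootS ht.le)

lemma continuousOn_phi : ContinuousOn phi (Set.Ioi 0) :=
  continuousOn_const.div continuousOn_rootS fun _ ht => rootS_ne_zero ht

lemma laplaceOK_phi : LaplaceOK phi := by
  refine .of_bound continuousOn_phi 1 0 0 fun t ht => ?_
  refine (norm_phi_le ht).trans ?_
  have : (2 * t) ^ (-(1 / 2) : ℝ) ≤ t ^ (-(1 / 2) : ℝ) :=
    Real.rpow_le_rpow_of_nonpos ht (by linarith) (by norm_num)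
  linarith

lemma laplaceOK_rootS : LaplaceOK rootS :=
  .of_bound continuousOn_rootS 0 1 1 fun t ht => by
    have := norm_rootS_le ht.le; linarith

/-- `∫₀^∞ e^{-z(t-i)} / √(2it - t²) dt`, which is `(π/2) H₀⁽¹⁾(z)`. -/
def hankelInt (z : ℂ) : ℂ :=
  ∫ t in Set.Ioi (0 : ℝ), Complex.exp (-z * (t - Complex.I)) * phi t

/-- The derivative `z d/dz` of `hankelInt`. -/
def thetaInt (z : ℂ) : ℂ :=
  z * -∫ t in Set.Ioi (0 : ℝ), Complex.exp (-z * (t - Complex.I)) * ((t - Complex.I) * phi t)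

lemma tendsto_exp_neg_mul_linear {a : ℝ} (ha : 0 < a) (C D : ℝ) :
    Tendsto (fun t : ℝ => Real.exp (-(a * t)) * (C * t + D)) atTop (𝓝 0) := by
  have h1 := tendsto_rpow_mul_exp_neg_mul_atTop_nhds_zero 1 a ha
  have h2 := tendsto_rpow_mul_exp_neg_mul_atTop_nhds_zero 0 a ha
  have := (h1.const_mul C).add (h2.const_mul D)
  simp only [mul_zero, add_zero, Real.rpow_one, Real.rpow_zero] at this
  refine this.congr fun t => ?_
  ring_nf

/-- The integral solves Bessel's equation: differentiating under the integral sign leaves the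
integral of an exact derivative whose boundary terms vanish. -/
lemma besselPair_int : BesselPair hankelInt thetaInt := by
  intro z hz
  have hz0 := ne_zero_of_re_pos hz
  have h1 := laplaceOK_phi.hasDerivAt hz
  have h2 := (laplaceOK_phi.mul_sub_I.hasDerivAt hz).neg
  constructor
  · refine h1.congr_deriv ?_
    rw [thetaInt]; field_simp
  · have h3 := (hasDerivAt_id z).mul h2
    refine h3.congr_deriv ?_
    -- the defect of the equation is the integral of the total derivative of `e^{-z(t-i)} √(2it-t²)`
    have hi0 := laplaceOK_phi.integrable hz
    have hi1 := laplaceOK_phi.mul_sub_I.integrable hz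
    have hi2 := laplaceOK_phi.mul_sub_I.mul_sub_I.integrable hz
    have hd : ∀ t ∈ Set.Ioi (0 : ℝ), HasDerivAt
        (fun t : ℝ => Complex.exp (-z * (t - Complex.I)) * rootS t)
        (z * (Complex.exp (-z * (t - Complex.I)) * ((t - Complex.I) * ((t - Complex.I) * phi t)))
          - Complex.exp (-z * (t - Complex.I)) * ((t - Complex.I) * phi t)
          + z * (Complex.exp (-z * (t - Complex.I)) * phi t)) t := by
      intro t ht
      have e1 : HasDerivAt (fun t : ℝ => -z * ((t : ℂ) - Complex.I)) (-z * 1) t :=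
        (((hasDerivAt_id t).ofReal_comp).sub_const _).const_mul _
      refine (e1.cexp.mul (hasDerivAt_rootS ht)).congr_deriv ?_
      have hS := rootS_ne_zero ht
      have hS2 := rootS_sq t
      simp only [phi]
      field_simp
      rw [hS2]
      linear_combination (-z) * Complex.I_sq
    have hcont : ContinuousWithinAt
        (fun t : ℝ => Complex.exp (-z * (t - Complex.I)) * rootS t) (Set.Ici 0) 0 :=
      (continuous_exp_laplace z).continuousWithinAt.mul continuousWithinAt_rootS
    have htop : Tendsto (fun t : ℝ => Complex.exp (-z * (t - Complex.I)) * rootS t)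
        atTop (𝓝 0) := by
      have hlin := (tendsto_exp_neg_mul_linear hz 1 1).const_mul (Real.exp (-z.im))
      rw [mul_zero] at hlin
      refine squeeze_zero_norm' ?_ hlin
      filter_upwards [eventually_ge_atTop 0] with t ht
      rw [norm_mul, norm_exp_laplace, mul_assoc]
      have := norm_rootS_le ht
      gcongr
      linarith
    have hint := integral_Ioi_of_hasDerivAt_of_tendsto hcont hd
      (((hi2.const_mul z).sub hi1).add (hi0.const_mul z)) htop
    have hsub : IntegrableOn (fun t : ℝ =>
        z * (Complex.exp (-z * (t - Complex.I)) * ((t - Complex.I) * ((t - Complex.I) * phi t)))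
          - Complex.exp (-z * (t - Complex.I)) * ((t - Complex.I) * phi t)) (Set.Ioi 0) :=
      (hi2.const_mul z).sub hi1
    rw [integral_add hsub (hi0.const_mul z),
      integral_sub (hi2.const_mul z) hi1, integral_const_mul, integral_const_mul, rootS_zero,
      mul_zero, sub_zero] at hint
    simp only [id, neg_neg, hankelInt, Pi.neg_apply]
    linear_combination hint

/-- The integral representation gives the bound directly, since `|2it - t²| ≥ 2t`. -/
lemma norm_hankelInt_le {z : ℂ} (hz : 0 < z.re) :
    ‖hankelInt z‖ ≤ Real.exp (-z.im) * √(Real.pi / (2 * z.re)) := by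
  have h0 := integrableOn_rpow_exp (s := -(1 / 2)) (by norm_num) hz
  have h1 : ‖hankelInt z‖ ≤ ∫ t in Set.Ioi (0 : ℝ), Real.exp (-z.im) * (2 : ℝ) ^ (-(1 / 2) : ℝ) *
      (Real.exp (-(z.re * t)) * t ^ (-(1 / 2) : ℝ)) := by
    refine norm_integral_le_of_norm_le (h0.const_mul _) ?_
    filter_upwards [ae_restrict_mem measurableSet_Ioi] with t ht
    have ht : 0 < t := ht
    have := norm_phi_le ht
    rw [Real.mul_rpow (by norm_num) ht.le] at this
    rw [norm_mul, norm_exp_laplace]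
    calc _ ≤ Real.exp (-z.im) * Real.exp (-(z.re * t)) *
          ((2 : ℝ) ^ (-(1 / 2) : ℝ) * t ^ (-(1 / 2) : ℝ)) := by gcongr
      _ = _ := by ring
  refine h1.trans_eq ?_
  have h2 := Real.integral_rpow_mul_exp_neg_mul_Ioi (a := 1 / 2) (by norm_num) hz
  rw [integral_const_mul, mul_assoc]
  simp_rw [mul_comm (Real.exp (-(z.re * _)))]
  rw [show (-(1 / 2) : ℝ) = 1 / 2 - 1 by norm_num, h2, Real.Gamma_one_half_eq,
    show (1 / 2 - 1 : ℝ) = -(1 / 2) by norm_num, Real.rpow_neg (by norm_num), ← Real.sqrt_eq_rpow,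
    ← Real.sqrt_eq_rpow, Real.sqrt_div (by positivity), Real.sqrt_div (by positivity),
    Real.sqrt_mul (by positivity), Real.sqrt_one]
  ring

/-! ### The primitive of the kernel -/

/-- `w + √(w² - 1)` at `w = 1 + it`, whose logarithm `arcosh w` is a primitive of `i phi`. -/
def expArcosh (t : ℝ) : ℂ := 1 + Complex.I * t + rootS t

lemma one_le_expArcosh_re (t : ℝ) : 1 ≤ (expArcosh t).re := by
  simp [expArcosh, rootS_re_nonneg]

lemma le_norm_expArcosh {t : ℝ} (ht : 0 ≤ t) : t ≤ ‖expArcosh t‖ := by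
  refine le_trans ?_ (Complex.im_le_norm _)
  simp [expArcosh, rootS_im_nonneg ht]

lemma one_le_norm_expArcosh (t : ℝ) : 1 ≤ ‖expArcosh t‖ :=
  (one_le_expArcosh_re t).trans (Complex.re_le_norm _)

lemma expArcosh_ne_zero (t : ℝ) : expArcosh t ≠ 0 :=
  norm_pos_iff.1 (one_pos.trans_le (one_le_norm_expArcosh t))

lemma norm_expArcosh_le {t : ℝ} (ht : 0 ≤ t) : ‖expArcosh t‖ ≤ 2 * t + 2 := by
  refine (norm_add_le _ _).trans ?_
  have h1 := norm_rootS_le ht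
  have h2 : ‖1 + Complex.I * (t : ℂ)‖ ≤ 1 + t := by
    refine (norm_add_le _ _).trans ?_
    simp [abs_of_nonneg ht]
  linarith

/-- The conjugate root: `(w + √(w² - 1)) (w - √(w² - 1)) = 1`. -/
lemma rootS_eq (t : ℝ) : rootS t = 1 + Complex.I * t - 1 / expArcosh t := by
  have h := expArcosh_ne_zero t
  have h2 := rootS_sq t
  have h3 : expArcosh t * (1 + Complex.I * t - rootS t) = 1 := by
    rw [expArcosh]
    linear_combination (-1) * h2 + (t : ℂ) ^ 2 * Complex.I_sq
  rw [eq_div_of_mul_eq h (by rw [mul_comm]; exact h3) |>.symm]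
  ring

lemma hasDerivAt_log_expArcosh {t : ℝ} (ht : 0 < t) :
    HasDerivAt (fun t => Complex.log (expArcosh t)) (Complex.I * phi t) t := by
  have h1 : HasDerivAt (fun t : ℝ => 1 + Complex.I * (t : ℂ)) (Complex.I * 1) t :=
    (((hasDerivAt_id t).ofReal_comp).const_mul _).const_add _
  have h2 := (h1.add (hasDerivAt_rootS ht)).clog_real
    (Or.inl (one_pos.trans_le (one_le_expArcosh_re t)))
  refine HasDerivAt.congr_deriv (f := fun t => Complex.log (expArcosh t)) h2 ?_
  have hS := rootS_ne_zero ht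
  have hE := expArcosh_ne_zero t
  change _ / expArcosh t = _
  rw [phi, div_eq_iff hE, expArcosh]
  field_simp
  linear_combination (-(t : ℂ)) * Complex.I_sq

lemma norm_log_le_abs (x : ℂ) : ‖Complex.log x‖ ≤ |Real.log ‖x‖| + 4 := by
  refine (Complex.norm_le_abs_re_add_abs_im _).trans ?_
  rw [Complex.log_re, Complex.log_im]
  have := Complex.abs_arg_le_pi x
  have := Real.pi_le_four
  linarith

lemma continuousOn_log_expArcosh :
    ContinuousOn (fun t => Complex.log (expArcosh t)) (Set.Ioi 0) := fun _ ht =>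
  (hasDerivAt_log_expArcosh ht).continuousAt.continuousWithinAt

lemma norm_log_expArcosh_le {t : ℝ} (ht : 0 ≤ t) :
    ‖Complex.log (expArcosh t)‖ ≤ 2 * t + 6 := by
  refine (norm_log_le_abs _).trans ?_
  rw [abs_of_nonneg (Real.log_nonneg (one_le_norm_expArcosh t))]
  have := Real.log_le_self (norm_nonneg (expArcosh t))
  have := norm_expArcosh_le ht
  linarith

lemma laplaceOK_log_expArcosh : LaplaceOK fun t => Complex.log (expArcosh t) :=
  .of_bound continuousOn_log_expArcosh 0 2 6 fun t ht => by
    have := norm_log_expArcosh_le ht.le; linarith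

/-- The substitution `u = x t`. -/
lemma laplace_scale (ψ : ℝ → ℂ) {x : ℝ} (hx : 0 < x) :
    x * ∫ t in Set.Ioi (0 : ℝ), Complex.exp (-(x : ℂ) * (t - Complex.I)) * ψ t =
      Complex.exp (Complex.I * x) *
        ∫ u in Set.Ioi (0 : ℝ), Complex.exp (-(u : ℂ)) * ψ (u / x) := by
  have h := integral_comp_mul_left_Ioi (fun u : ℝ => Complex.exp (-(u : ℂ)) * ψ (u / x)) 0 hx
  rw [mul_zero] at h
  have h2 : ∀ t : ℝ, Complex.exp (-(x : ℂ) * (t - Complex.I)) * ψ t =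
      Complex.exp (Complex.I * x) *
        (Complex.exp (-((x * t : ℝ) : ℂ)) * ψ (x * t / x)) := by
    intro t
    rw [mul_div_cancel_left₀ _ hx.ne', ← mul_assoc, ← Complex.exp_add]
    congr 2
    push_cast; ring
  simp_rw [h2]
  rw [integral_const_mul, h, Complex.real_smul]
  have : (x : ℂ) ≠ 0 := by exact_mod_cast hx.ne'
  push_cast
  field_simp

/-- Integration by parts against the primitive `arcosh (1 + it)`. -/
lemma hankelInt_real {x : ℝ} (hx : 0 < x) :
    hankelInt x = -Complex.I * (Complex.exp (Complex.I * x) *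
      ∫ u in Set.Ioi (0 : ℝ), Complex.exp (-(u : ℂ)) * Complex.log (expArcosh (u / x))) := by
  have hz : 0 < ((x : ℂ)).re := by simpa using hx
  rw [← laplace_scale (fun t => Complex.log (expArcosh t)) hx]
  have hi0 := laplaceOK_phi.integrable hz
  have hi1 := laplaceOK_log_expArcosh.integrable hz
  have hd : ∀ t ∈ Set.Ioi (0 : ℝ), HasDerivAt
      (fun t : ℝ => Complex.exp (-(x : ℂ) * (t - Complex.I)) * Complex.log (expArcosh t))
      (Complex.I * (Complex.exp (-(x : ℂ) * (t - Complex.I)) * phi t)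
        - x * (Complex.exp (-(x : ℂ) * (t - Complex.I)) * Complex.log (expArcosh t))) t := by
    intro t ht
    have e1 : HasDerivAt (fun t : ℝ => -(x : ℂ) * ((t : ℂ) - Complex.I)) (-(x : ℂ) * 1) t :=
      (((hasDerivAt_id t).ofReal_comp).sub_const _).const_mul _
    refine (e1.cexp.mul (hasDerivAt_log_expArcosh ht)).congr_deriv ?_
    ring
  have hE0 : expArcosh 0 = 1 := by simp [expArcosh, rootS_zero]
  have hEc : ContinuousWithinAt expArcosh (Set.Ici 0) 0 :=
    ContinuousWithinAt.add (Continuous.continuousWithinAt (by fun_prop)) continuousWithinAt_rootS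
  have hcont : ContinuousWithinAt
      (fun t : ℝ => Complex.exp (-(x : ℂ) * (t - Complex.I)) * Complex.log (expArcosh t))
      (Set.Ici 0) 0 :=
    (continuous_exp_laplace x).continuousWithinAt.mul (hEc.clog (by rw [hE0]; simp))
  have htop : Tendsto
      (fun t : ℝ => Complex.exp (-(x : ℂ) * (t - Complex.I)) * Complex.log (expArcosh t))
      atTop (𝓝 0) := by
    have hlin := (tendsto_exp_neg_mul_linear hz 2 6).const_mul (Real.exp (-(x : ℂ).im))
    rw [mul_zero] at hlin
    refine squeeze_zero_norm' ?_ hlin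
    filter_upwards [eventually_ge_atTop 0] with t ht
    rw [norm_mul, norm_exp_laplace, mul_assoc]
    have := norm_log_expArcosh_le ht
    gcongr
  have hint := integral_Ioi_of_hasDerivAt_of_tendsto hcont hd
    ((hi0.const_mul _).sub (hi1.const_mul _)) htop
  rw [integral_sub (hi0.const_mul _) (hi1.const_mul _), integral_const_mul, integral_const_mul,
    hE0, Complex.log_one, mul_zero, sub_zero, sub_eq_zero] at hint
  rw [← hint, hankelInt]
  linear_combination (∫ t in Set.Ioi (0 : ℝ),
    Complex.exp (-(x : ℂ) * (t - Complex.I)) * phi t) * Complex.I_sq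

/-! ### Behaviour of the integral at the origin -/

lemma ofReal_tendsto_zero : Tendsto (fun x : ℝ => (x : ℂ)) (𝓝[>] 0) (𝓝 0) :=
  (Complex.continuous_ofReal.tendsto' 0 0 (by simp)).mono_left nhdsWithin_le_nhds

lemma tendsto_mul_expArcosh (u : ℝ) :
    Tendsto (fun x : ℝ => (x : ℂ) / expArcosh (u / x)) (𝓝[>] 0) (𝓝 0) := by
  have h : Tendsto (fun x : ℝ => ‖(x : ℂ)‖) (𝓝[>] 0) (𝓝 0) := by
    simpa only [norm_zero] using ofReal_tendsto_zero.norm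
  refine squeeze_zero_norm (fun x => ?_) h
  rw [norm_div]
  exact div_le_self (norm_nonneg _) (one_le_norm_expArcosh _)

lemma tendsto_scaled_rootS (u : ℝ) :
    Tendsto (fun x : ℝ => (x : ℂ) * rootS (u / x)) (𝓝[>] 0) (𝓝 (Complex.I * u)) := by
  have h := (ofReal_tendsto_zero.add_const (Complex.I * u)).sub (tendsto_mul_expArcosh u)
  rw [zero_add, sub_zero] at h
  refine h.congr' ?_
  filter_upwards [self_mem_nhdsWithin] with x hx
  have : (x : ℂ) ≠ 0 := by exact_mod_cast (ne_of_gt hx : x ≠ 0)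
  rw [rootS_eq]
  push_cast
  field_simp

lemma tendsto_scaled_expArcosh (u : ℝ) :
    Tendsto (fun x : ℝ => (x : ℂ) * expArcosh (u / x)) (𝓝[>] 0) (𝓝 (2 * Complex.I * u)) := by
  have h := (ofReal_tendsto_zero.add_const (Complex.I * u)).add (tendsto_scaled_rootS u)
  rw [zero_add, show Complex.I * (u : ℂ) + Complex.I * u = 2 * Complex.I * u by ring] at h
  refine h.congr' ?_
  filter_upwards [self_mem_nhdsWithin] with x hx
  have : (x : ℂ) ≠ 0 := by exact_mod_cast (ne_of_gt hx : x ≠ 0)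
  rw [expArcosh]
  push_cast
  field_simp

lemma abs_log_le_rpow {u : ℝ} (hu : 0 < u) :
    |Real.log u| ≤ 2 * u ^ (-(1 / 2) : ℝ) + u := by
  have h1 := Real.log_le_self hu.le
  have h2 := Real.log_le_rpow_div (inv_nonneg.2 hu.le) (by norm_num : (0 : ℝ) < 1 / 2)
  rw [Real.log_inv, Real.inv_rpow hu.le, ← Real.rpow_neg hu.le] at h2
  have h3 : 0 < u ^ (-(1 / 2) : ℝ) := by positivity
  rw [abs_le]; constructor <;> linarith

lemma laplaceOK_log : LaplaceOK fun u => (Real.log u : ℂ) := by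
  refine .of_bound ?_ 2 1 0 fun t ht => ?_
  · exact Complex.continuous_ofReal.comp_continuousOn
      (Real.continuousOn_log.mono fun t ht => (ne_of_gt ht : t ≠ 0))
  · rw [Complex.norm_real, Real.norm_eq_abs]
    have := abs_log_le_rpow ht
    linarith

lemma laplaceOK_const (c : ℂ) : LaplaceOK fun _ => c :=
  .of_bound continuousOn_const 0 0 ‖c‖ fun t _ => by simp

lemma LaplaceOK.integrable_exp {ψ : ℝ → ℂ} (h : LaplaceOK ψ) :
    IntegrableOn (fun u : ℝ => Complex.exp (-(u : ℂ)) * ψ u) (Set.Ioi 0) := by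
  refine (h.2 1 one_pos).mono' ((Continuous.aestronglyMeasurable (by fun_prop)).mul h.1)
    (Eventually.of_forall fun u => ?_)
  rw [norm_mul, Complex.norm_exp]
  simp

lemma integral_exp_eq_one : ∫ u in Set.Ioi (0 : ℝ), Complex.exp (-(u : ℂ)) = 1 := by
  have := integral_exp_neg_Ioi_zero
  have h : ∀ u : ℝ, Complex.exp (-(u : ℂ)) = ((Real.exp (-u) : ℝ) : ℂ) := by
    intro u; push_cast; rfl
  simp_rw [h]
  rw [integral_complex_ofReal, this, Complex.ofReal_one]

/-- `Γ'(1) = -γ` as an integral. -/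
lemma integral_exp_log : ∫ u in Set.Ioi (0 : ℝ), Complex.exp (-(u : ℂ)) * (Real.log u : ℂ) =
    -(Real.eulerMascheroniConstant : ℂ) := by
  have h1 := Complex.hasDerivAt_GammaIntegral (s := 1) (by simp)
  have h2 : Complex.Gamma =ᶠ[𝓝 1] Complex.GammaIntegral := by
    filter_upwards [(isOpen_lt continuous_const Complex.continuous_re).mem_nhds
      (show (1 : ℂ) ∈ {s : ℂ | 0 < s.re} by simp)] with s hs
    exact Complex.Gamma_eq_integral hs
  rw [← (h1.congr_of_eventuallyEq h2).unique Complex.hasDerivAt_Gamma_one]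
  refine setIntegral_congr_fun measurableSet_Ioi fun u _ => ?_
  simp [mul_comm]

/-- The scaled integral `∫ e^{-u} log (x exp (arcosh (1 + iu/x))) du`, bounded as `x → 0⁺`. -/
def logInt (x : ℝ) : ℂ :=
  ∫ u in Set.Ioi (0 : ℝ), Complex.exp (-(u : ℂ)) * Complex.log (x * expArcosh (u / x))

lemma continuousOn_scaled_log {x : ℝ} (hx : 0 < x) :
    ContinuousOn (fun u : ℝ => Complex.log (expArcosh (u / x))) (Set.Ioi 0) :=
  continuousOn_log_expArcosh.comp (by fun_prop) fun u hu => div_pos hu hx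

lemma log_scaled {x : ℝ} (hx : 0 < x) (u : ℝ) : Complex.log (x * expArcosh (u / x)) =
    (Real.log x : ℂ) + Complex.log (expArcosh (u / x)) :=
  Complex.log_ofReal_mul hx (expArcosh_ne_zero _)

/-- After the scaling `u = x t` the integrand tends to `e^{-u} log (2iu)`, whose integral is
known from `Γ'(1) = -γ`. -/
lemma tendsto_logInt : Tendsto logInt (𝓝[>] 0)
    (𝓝 (-(Real.eulerMascheroniConstant : ℂ) + Complex.log (2 * Complex.I))) := by
  have hlim : ∫ u in Set.Ioi (0 : ℝ), Complex.exp (-(u : ℂ)) * Complex.log (2 * Complex.I * u) =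
      -(Real.eulerMascheroniConstant : ℂ) + Complex.log (2 * Complex.I) := by
    have h : ∀ u ∈ Set.Ioi (0 : ℝ), Complex.exp (-(u : ℂ)) * Complex.log (2 * Complex.I * u) =
        Complex.exp (-(u : ℂ)) * (Real.log u : ℂ)
          + Complex.exp (-(u : ℂ)) * Complex.log (2 * Complex.I) := by
      intro u hu
      rw [mul_comm _ (u : ℂ), Complex.log_ofReal_mul hu (by simp), mul_add]
    rw [setIntegral_congr_fun measurableSet_Ioi h,
      integral_add laplaceOK_log.integrable_exp (laplaceOK_const _).integrable_exp,
      integral_mul_const, integral_exp_log, integral_exp_eq_one, one_mul]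
  rw [← hlim]
  refine tendsto_integral_filter_of_dominated_convergence
    (fun u => Real.exp (-(1 * u)) * (2 * u ^ (-(1 / 2) : ℝ) + 3 * u + 6)) ?_ ?_
    (integrableOn_bound one_pos 2 3 6) ?_
  · filter_upwards [self_mem_nhdsWithin] with x hx
    refine ContinuousOn.aestronglyMeasurable ?_ measurableSet_Ioi
    simp_rw [log_scaled hx]
    exact ContinuousOn.mul (by fun_prop) (continuousOn_const.add (continuousOn_scaled_log hx))
  · filter_upwards [Ioo_mem_nhdsGT one_pos] with x hx
    filter_upwards [ae_restrict_mem measurableSet_Ioi] with u hu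
    have hu : 0 < u := hu
    have hn : ‖(x : ℂ) * expArcosh (u / x)‖ = x * ‖expArcosh (u / x)‖ := by
      rw [norm_mul, Complex.norm_real, Real.norm_of_nonneg hx.1.le]
    have hux : 0 ≤ u / x := (div_pos hu hx.1).le
    have hlow : u ≤ ‖(x : ℂ) * expArcosh (u / x)‖ := by
      rw [hn]
      calc u = x * (u / x) := by field_simp [hx.1.ne']
        _ ≤ _ := mul_le_mul_of_nonneg_left (le_norm_expArcosh hux) hx.1.le
    have hup : ‖(x : ℂ) * expArcosh (u / x)‖ ≤ 2 * u + 2 := by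
      rw [hn]
      calc x * ‖expArcosh (u / x)‖ ≤ x * (2 * (u / x) + 2) :=
            mul_le_mul_of_nonneg_left (norm_expArcosh_le hux) hx.1.le
        _ = 2 * u + 2 * x := by field_simp [hx.1.ne']
        _ ≤ _ := by linarith [hx.2]
    have h1 : |Real.log ‖(x : ℂ) * expArcosh (u / x)‖| ≤ 2 * u ^ (-(1 / 2) : ℝ) + 3 * u + 2 := by
      have h2 := Real.log_le_log hu hlow
      have h3 := Real.log_le_self (norm_nonneg ((x : ℂ) * expArcosh (u / x)))
      have h4 := abs_le.1 (abs_log_le_rpow hu)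
      have h5 : 0 < u ^ (-(1 / 2) : ℝ) := by positivity
      rw [abs_le]; constructor <;> linarith
    rw [norm_mul, Complex.norm_exp]
    have h6 := norm_log_le_abs ((x : ℂ) * expArcosh (u / x))
    simp only [Complex.neg_re, Complex.ofReal_re, one_mul]
    gcongr
    linarith
  · filter_upwards [ae_restrict_mem measurableSet_Ioi] with u hu
    have hu : 0 < u := hu
    refine ((tendsto_scaled_expArcosh u).clog ?_).const_mul _
    exact Or.inr (by simp [hu.ne'])

lemma hankelInt_real_eq {x : ℝ} (hx : 0 < x) :
    hankelInt x = -Complex.I * (Complex.exp (Complex.I * x) * (logInt x - Real.log x)) := by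
  rw [hankelInt_real hx]
  congr 2
  rw [logInt]
  have h1 : IntegrableOn (fun u : ℝ => Complex.exp (-(u : ℂ)) * Complex.log (expArcosh (u / x)))
      (Set.Ioi 0) := by
    refine LaplaceOK.integrable_exp (ψ := fun u => Complex.log (expArcosh (u / x)))
      (.of_bound (continuousOn_scaled_log hx) 0 (2 / x) 6 fun t ht => ?_)
    refine (norm_log_expArcosh_le (div_pos ht hx).le).trans_eq ?_
    ring
  have h2 := (laplaceOK_const (Real.log x)).integrable_exp
  simp_rw [log_scaled hx, mul_add]
  rw [integral_add h2 h1, integral_mul_const, integral_exp_eq_one]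
  ring

/-- A function differentiable at `0` and vanishing there kills a logarithm. -/
lemma tendsto_mul_log {N : ℂ → ℂ} (hN : DifferentiableAt ℂ N 0) (hN0 : N 0 = 0) :
    Tendsto (fun x : ℝ => N x * (Real.log x : ℂ)) (𝓝[>] 0) (𝓝 0) := by
  have h1 : N =O[𝓝 0] fun z => z := by
    simpa [hN0] using hN.isBigO_sub
  have h2 := (h1.comp_tendsto ofReal_tendsto_zero).mul
    (Asymptotics.isBigO_refl (fun x : ℝ => (Real.log x : ℂ)) (𝓝[>] 0))
  refine h2.trans_tendsto ?_
  have h3 := tendsto_log_mul_rpow_nhdsGT_zero one_pos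
  have h4 := (Complex.continuous_ofReal.tendsto 0).comp h3
  rw [Complex.ofReal_zero] at h4
  refine h4.congr fun x => ?_
  simp [mul_comm]

/-- The integral of `t phi t` against the exponential, scaled by `u = x t`, has integrand tending to
`-i e^{-u}`; the remaining part is `x` times a logarithmically growing function. -/
lemma tendsto_thetaInt : Tendsto (fun x : ℝ => thetaInt x) (𝓝[>] 0) (𝓝 Complex.I) := by
  have hexp : Tendsto (fun x : ℝ => Complex.exp (Complex.I * x)) (𝓝[>] 0) (𝓝 1) :=
    ((show Continuous fun x : ℝ => Complex.exp (Complex.I * x) by fun_prop).tendsto' 0 1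
      (by simp)).mono_left nhdsWithin_le_nhds
  have hxlog : Tendsto (fun x : ℝ => (x : ℂ) * hankelInt x) (𝓝[>] 0) (𝓝 0) := by
    have h1 := tendsto_mul_log (N := fun z => z) differentiableAt_id rfl
    have h2 := ((ofReal_tendsto_zero.mul tendsto_logInt).sub h1)
    have h3 := (hexp.mul h2).const_mul (-Complex.I)
    simp only [zero_mul, sub_zero, mul_zero] at h3
    refine h3.congr' ?_
    filter_upwards [self_mem_nhdsWithin] with x hx
    rw [hankelInt_real_eq hx]
    ring
  have hK : Tendsto (fun x : ℝ => ∫ u in Set.Ioi (0 : ℝ),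
      Complex.exp (-(u : ℂ)) * (((u / x : ℝ) : ℂ) * phi (u / x))) (𝓝[>] 0) (𝓝 (-Complex.I)) := by
    have hlim : ∫ u in Set.Ioi (0 : ℝ), Complex.exp (-(u : ℂ)) * (-Complex.I) = -Complex.I := by
      rw [integral_mul_const, integral_exp_eq_one, one_mul]
    rw [← hlim]
    refine tendsto_integral_filter_of_dominated_convergence
      (fun u => Real.exp (-(1 * u)) * (0 * u ^ (-(1 / 2) : ℝ) + 0 * u + 1)) ?_ ?_
      (integrableOn_bound one_pos 0 0 1) ?_
    · filter_upwards [self_mem_nhdsWithin] with x hx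
      refine ContinuousOn.aestronglyMeasurable ?_ measurableSet_Ioi
      refine ContinuousOn.mul (by fun_prop) (ContinuousOn.mul (by fun_prop) ?_)
      exact continuousOn_phi.comp (by fun_prop) fun u hu =>
        Set.mem_Ioi.2 (div_pos (Set.mem_Ioi.1 hu) (Set.mem_Ioi.1 hx))
    · filter_upwards [self_mem_nhdsWithin] with x hx
      filter_upwards [ae_restrict_mem measurableSet_Ioi] with u hu
      have hux : 0 < u / x := div_pos hu hx
      have h1 : ‖((u / x : ℝ) : ℂ) * phi (u / x)‖ ≤ 1 := by
        rw [phi, mul_one_div, norm_div, Complex.norm_real, Real.norm_of_nonneg hux.le]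
        exact div_le_one_of_le₀ (le_norm_rootS hux.le) (norm_nonneg _)
      rw [norm_mul, Complex.norm_exp]
      simp only [Complex.neg_re, Complex.ofReal_re, one_mul, zero_mul, zero_add]
      gcongr
    · filter_upwards [ae_restrict_mem measurableSet_Ioi] with u hu
      have hu' : (u : ℂ) ≠ 0 := by exact_mod_cast (ne_of_gt hu : u ≠ 0)
      refine Tendsto.const_mul _ ?_
      have h1 := (tendsto_const_nhds (x := (u : ℂ))).div (tendsto_scaled_rootS u)
        (mul_ne_zero Complex.I_ne_zero hu')
      have h2 : (u : ℂ) / (Complex.I * u) = -Complex.I := by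
        rw [div_eq_iff (mul_ne_zero Complex.I_ne_zero hu')]
        linear_combination (u : ℂ) * Complex.I_sq
      rw [h2] at h1
      refine h1.congr' ?_
      filter_upwards [self_mem_nhdsWithin] with x hx
      have hS := rootS_ne_zero (div_pos hu hx)
      have : (x : ℂ) ≠ 0 := by exact_mod_cast (ne_of_gt hx : x ≠ 0)
      rw [phi]
      simp only [Pi.div_apply]
      push_cast
      field_simp
  have h := ((hexp.mul hK).neg).add (hxlog.const_mul Complex.I)
  rw [one_mul, neg_neg, mul_zero, add_zero] at h
  refine h.congr' ?_
  filter_upwards [self_mem_nhdsWithin] with x hx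
  have hz : 0 < ((x : ℂ)).re := by simpa using hx
  have hi0 := laplaceOK_phi.integrable hz
  have hi1 := laplaceOK_phi.mul_sub_I.integrable hz
  rw [← laplace_scale (fun t => (t : ℂ) * phi t) hx]
  have h1 : ∫ t in Set.Ioi (0 : ℝ), Complex.exp (-(x : ℂ) * (t - Complex.I)) * ((t : ℂ) * phi t) =
      (∫ t in Set.Ioi (0 : ℝ), Complex.exp (-(x : ℂ) * (t - Complex.I)) *
        ((t - Complex.I) * phi t)) + Complex.I * hankelInt x := by
    rw [hankelInt, ← integral_const_mul, ← integral_add hi1 (hi0.const_mul _)]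
    congr 1; funext t; ring
  rw [h1, thetaInt]
  ring

lemma log_two_I : Complex.log (2 * Complex.I) = Real.log 2 + Real.pi / 2 * Complex.I := by
  have := Complex.log_ofReal_mul (r := 2) (by norm_num) Complex.I_ne_zero
  rw [Complex.log_I] at this
  exact_mod_cast this

lemma log_half {x : ℝ} (hx : 0 < x) :
    Complex.log ((x : ℂ) / 2) = Real.log x - Real.log 2 := by
  rw [← Complex.ofReal_sub, ← Real.log_div hx.ne' (by norm_num),
    Complex.ofReal_log (by positivity)]
  push_cast; rfl

/-! ### Comparison with the series at the origin -/

lemma EntireCoeff.differentiable_sq {c : ℕ → ℂ} (hc : EntireCoeff c) :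
    Differentiable ℂ fun z => pSeries c (z ^ 2 / 4) := fun z =>
  DifferentiableAt.comp (f := fun z : ℂ => z ^ 2 / 4) z
    (hc.exists_hasDerivAt (z ^ 2 / 4)).choose_spec.1.differentiableAt (by fun_prop)

/-- A series in `x²/4` tends to its constant term. -/
lemma tendsto_series {c : ℕ → ℂ} (hc : EntireCoeff c) :
    Tendsto (fun x : ℝ => pSeries c ((x : ℂ) ^ 2 / 4)) (𝓝[>] 0) (𝓝 (c 0)) := by
  have h : Tendsto (fun x : ℝ => pSeries c ((x : ℂ) ^ 2 / 4)) (𝓝[>] 0)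
      (𝓝 (pSeries c ((0 : ℂ) ^ 2 / 4))) :=
    (hc.differentiable_sq.continuous.tendsto 0).comp ofReal_tendsto_zero
  simpa [pSeries_zero] using h

/-- Both sides are `1 + (2i/π)(γ + log (x/2)) + o(1)` as `x → 0⁺`; the logarithms cancel up to
`(e^{ix} - J₀(x)) log x → 0`. -/
lemma tendsto_sub_hankel :
    Tendsto (fun x : ℝ => (2 / Real.pi : ℂ) * hankelInt x - hankelH0 x) (𝓝[>] 0) (𝓝 0) := by
  have hpi : (Real.pi : ℂ) ≠ 0 := by exact_mod_cast Real.pi_ne_zero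
  have hexp : Tendsto (fun x : ℝ => Complex.exp (Complex.I * x)) (𝓝[>] 0) (𝓝 1) :=
    ((show Continuous fun x : ℝ => Complex.exp (Complex.I * x) by fun_prop).tendsto' 0 1
      (by simp)).mono_left nhdsWithin_le_nhds
  have hJ := tendsto_series entire_coeffJ
  have hK := tendsto_series entire_coeffK
  have hJ0 : coeffJ 0 = 1 := by simp [coeffJ]
  have hK0 : coeffK 0 = 0 := by simp [coeffK, harmSum]
  rw [hJ0] at hJ
  rw [hK0] at hK
  have hN := tendsto_mul_log
    (N := fun z => Complex.exp (Complex.I * z) - pSeries coeffJ (z ^ 2 / 4))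
    (DifferentiableAt.sub (by fun_prop) (entire_coeffJ.differentiable_sq 0))
    (by simp [pSeries_zero, hJ0])
  have h := (((((hexp.mul tendsto_logInt).const_mul (2 / (Real.pi : ℂ) * -Complex.I)).sub hJ).sub
    (hJ.const_mul (2 * Complex.I / Real.pi *
      ((Real.eulerMascheroniConstant : ℂ) - Real.log 2)))).add
    (hK.const_mul (2 * Complex.I / (Real.pi : ℂ)))).add
    (hN.const_mul (2 * Complex.I / (Real.pi : ℂ)))
  have h0 : 2 / (Real.pi : ℂ) * -Complex.I *
      (1 * (-(Real.eulerMascheroniConstant : ℂ) + Complex.log (2 * Complex.I))) - 1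
      - 2 * Complex.I / Real.pi * ((Real.eulerMascheroniConstant : ℂ) - Real.log 2) * 1
      + 2 * Complex.I / (Real.pi : ℂ) * 0 + 2 * Complex.I / (Real.pi : ℂ) * 0 = 0 := by
    rw [log_two_I]
    field_simp
    linear_combination (-(Real.pi : ℂ)) * Complex.I_sq
  rw [h0] at h
  refine h.congr' ?_
  filter_upwards [self_mem_nhdsWithin] with x hx
  rw [hankelInt_real_eq hx, hankelH0, besselY0_eq, besselJ0_eq, log_half hx]
  field_simp
  ring

lemma tendsto_thetaH :
    Tendsto (fun x : ℝ => thetaH x) (𝓝[>] 0) (𝓝 (2 / Real.pi * Complex.I)) := by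
  have hJ := tendsto_series entire_coeffJ
  have hT := tendsto_series entire_coeffJ.theta
  have hK := tendsto_series entire_coeffK.theta
  have hJ0 : coeffJ 0 = 1 := by simp [coeffJ]
  have hT0 : thetaCoeff coeffJ 0 = 0 := by simp [thetaCoeff]
  have hK0 : thetaCoeff coeffK 0 = 0 := by simp [thetaCoeff]
  rw [hJ0] at hJ
  rw [hT0] at hT
  rw [hK0] at hK
  have hN := tendsto_mul_log (N := fun z => pSeries (thetaCoeff coeffJ) (z ^ 2 / 4))
    (entire_coeffJ.theta.differentiable_sq 0) (by simp [pSeries_zero, hT0])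
  have h := (hT.const_mul 2).add (((((hJ.add (hT.const_mul
    (2 * ((Real.eulerMascheroniConstant : ℂ) - Real.log 2)))).add (hN.const_mul 2)).sub
    (hK.const_mul 2)).const_mul (2 / (Real.pi : ℂ))).const_mul Complex.I)
  simp only [mul_zero, add_zero, zero_add, sub_zero, mul_one] at h
  rw [mul_comm]
  refine h.congr' ?_
  filter_upwards [self_mem_nhdsWithin] with x hx
  rw [thetaH, thetaJ, besselJ0_eq, log_half hx]
  ring

/-! ### Identification and conclusion -/

/-- The integral representation of the Hankel function on the right half-plane. -/
lemma hankelH0_eq {z : ℂ} (hz : 0 < z.re) : hankelH0 z = (2 / Real.pi : ℂ) * hankelInt z := by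
  have hp : BesselPair (fun z => (2 / Real.pi : ℂ) * hankelInt z - hankelH0 z)
      (fun z => (2 / Real.pi : ℂ) * thetaInt z - thetaH z) := by
    intro z hz
    obtain ⟨h1, h2⟩ := besselPair_int z hz
    obtain ⟨h3, h4⟩ := besselPair_H z hz
    refine ⟨((h1.const_mul _).sub h3).congr_deriv ?_, ((h2.const_mul _).sub h4).congr_deriv ?_⟩
      <;> ring
  have hg : Tendsto (fun x : ℝ => (2 / Real.pi : ℂ) * thetaInt x - thetaH x) (𝓝[>] 0) (𝓝 0) := by
    have := (tendsto_thetaInt.const_mul (2 / Real.pi : ℂ)).sub tendsto_thetaH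
    rwa [sub_self] at this
  exact (sub_eq_zero.1 (hp.eq_zero tendsto_sub_hankel hg hz)).symm

lemma norm_hankelH0_le {z : ℂ} (hz : 0 < z.re) :
    ‖hankelH0 z‖ ≤ Real.exp |z.im| / √z.re := by
  have hpi := Real.pi_pos
  rw [hankelH0_eq hz, norm_mul]
  have h1 : ‖(2 / Real.pi : ℂ)‖ = 2 / Real.pi := by
    rw [norm_div, Complex.norm_real, Real.norm_of_nonneg hpi.le]; simp
  -- `(2/π) √(π/2) = √(2/π) ≤ 1`
  have h2 : 2 / Real.pi * √(Real.pi / (2 * z.re)) ≤ 1 / √z.re := by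
    have h3 : √(Real.pi / (2 * z.re)) = √(Real.pi / 2) / √z.re := by
      rw [← Real.sqrt_div (by positivity)]; congr 1; field_simp
    have h4 : √(Real.pi / 2) ≤ Real.pi / 2 := by
      rw [Real.sqrt_le_left (by positivity)]
      nlinarith [Real.pi_gt_three]
    rw [h3, ← mul_div_assoc]
    gcongr
    calc 2 / Real.pi * √(Real.pi / 2) ≤ 2 / Real.pi * (Real.pi / 2) := by gcongr
      _ = 1 := by field_simp
  calc _ ≤ 2 / Real.pi * (Real.exp (-z.im) * √(Real.pi / (2 * z.re))) := by
        rw [h1]; gcongr; exact norm_hankelInt_le hz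
    _ = Real.exp (-z.im) * (2 / Real.pi * √(Real.pi / (2 * z.re))) := by ring
    _ ≤ Real.exp |z.im| * (1 / √z.re) := by
        gcongr
        exact neg_le_abs _
    _ = _ := by ring

open ComplexConjugate in
lemma hankelH0bar_eq {z : ℂ} (hz : 0 < z.re) : hankelH0bar z = conj (hankelH0 (conj z)) := by
  have h2 : conj (2 : ℂ) = 2 := Complex.conj_ofNat 2
  have h4 : conj (4 : ℂ) = 4 := Complex.conj_ofNat 4
  have hser : ∀ c : ℕ → ℂ, (∀ m, conj (c m) = c m) → ∀ w,
      conj (pSeries c (conj w ^ 2 / 4)) = pSeries c (w ^ 2 / 4) := by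
    intro c hc w
    rw [pSeries, Complex.conj_tsum]
    refine tsum_congr fun m => ?_
    simp [hc m, h4]
  have hJ : ∀ m, conj (coeffJ m) = coeffJ m := fun m => by simp [coeffJ]
  have hK : ∀ m, conj (coeffK m) = coeffK m := fun m => by
    rw [coeffK, map_mul, hJ]; simp [harmSum]
  have hlog : conj (Complex.log (conj z / 2)) = Complex.log (z / 2) := by
    have h1 : conj z / 2 = conj (z / 2) := by simp [h2]
    have h3 : 0 < (z / 2).re := by simpa using hz
    rw [h1, Complex.log_conj _ fun h => ?_, Complex.conj_conj]
    rw [Complex.arg_eq_pi_iff] at h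
    linarith [h.1]
  rw [hankelH0bar, hankelH0, besselY0_eq, besselY0_eq, besselJ0_eq, besselJ0_eq]
  simp only [map_add, map_mul, map_sub, map_div₀, Complex.conj_I, Complex.conj_ofReal, hlog,
    hser _ hJ, hser _ hK, h2]
  ring

end

/-- **Elementary bound for the Hankel functions**: for `Re z > 0`,
`|H₀⁽¹⁾(z)| ≤ e^{|Im z|}/√(Re z)` and `|H̄₀⁽¹⁾(z)| ≤ e^{|Im z|}/√(Re z)`. -/
theorem hankel_sqrt_bound (z : ℂ) (hz : 0 < z.re) :
    ‖hankelH0 z‖ ≤ Real.exp |z.im| / Real.sqrt z.re ∧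
      ‖hankelH0bar z‖ ≤ Real.exp |z.im| / Real.sqrt z.re := by
  refine ⟨norm_hankelH0_le hz, ?_⟩
  rw [hankelH0bar_eq hz, RCLike.norm_conj]
  simpa using norm_hankelH0_le (z := starRingEnd ℂ z) (by simpa using hz)
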